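/- arXiv:1411.7983 — 3 statements merged into one kernel-verified Lean document; each statement's English description precedes it below -/
import Mathlib

section
/- For every real α with 0 < α < 2, the improper integral ∫₀^∞ (1 − cos u)/u^{1+α} du converges and equals π / (2 Γ(α+1) sin(πα/2)), where Γ is the Gamma function. -/
open Real MeasureTheory

theorem swap_aux (F : ℝ → ℝ → ℝ) (A B : ℝ → ℝ) (c : ℝ)
    (hm : Measurable (Function.uncurry F))
    (h0 : ∀ x > 0, ∀ y > 0, 0 ≤ F x y)
    (hA : ∀ x > 0, ∫ y in Set.Ioi (0 : ℝ), F x y = A x)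
    (hBi : ∀ y > 0, IntegrableOn (fun x => F x y) (Set.Ioi 0))
    (hB : ∀ y > 0, ∫ x in Set.Ioi (0 : ℝ), F x y = B y)
    (hi : IntegrableOn B (Set.Ioi 0)) (hc : ∫ y in Set.Ioi (0 : ℝ), B y = c) :
    IntegrableOn A (Set.Ioi 0) ∧ ∫ x in Set.Ioi (0 : ℝ), A x = c := by
  have hprod : Integrable (Function.uncurry F)
      ((volume.restrict (Set.Ioi (0 : ℝ))).prod (volume.restrict (Set.Ioi (0 : ℝ)))) := by
    rw [integrable_prod_iff' hm.aestronglyMeasurable]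
    constructor
    · filter_upwards [ae_restrict_mem measurableSet_Ioi] with y hy
      exact hBi y hy
    · refine hi.congr ?_
      filter_upwards [ae_restrict_mem measurableSet_Ioi] with y hy
      rw [← hB y hy]
      refine setIntegral_congr_fun measurableSet_Ioi fun x hx => ?_
      simp only [Function.uncurry]
      rw [Real.norm_of_nonneg (h0 x hx y hy)]
  constructor
  · refine (hprod.integral_prod_left).congr ?_
    filter_upwards [ae_restrict_mem measurableSet_Ioi] with x hx
    exact hA x hx
  · rw [← hc, ← setIntegral_congr_fun measurableSet_Ioi hA,
      ← setIntegral_congr_fun measurableSet_Ioi hB]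
    exact integral_integral_swap hprod

theorem integral_aux (α : ℝ) (hα0 : 0 < α) (hα2 : α < 2) :
    IntegrableOn (fun t : ℝ => t ^ (α - 1) / (1 + t ^ 2)) (Set.Ioi 0) ∧
    ∫ t in Set.Ioi (0 : ℝ), t ^ (α - 1) / (1 + t ^ 2) = π / (2 * Real.sin (π * α / 2)) := by
  refine swap_aux (fun t s => t ^ (α - 1) * exp (-(1 + t ^ 2) * s)) _
    (fun s => (Real.Gamma (α / 2) / 2) * (exp (-s) * s ^ ((1 - α / 2) - 1))) _ (by fun_prop)
    ?_ ?_ ?_ ?_ ?_ ?_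
  · intro x hx y hy
    have : 0 < x := hx
    positivity
  · intro x hx
    have h : -(1 + x ^ 2) < 0 := by nlinarith
    rw [integral_const_mul, integral_exp_mul_Ioi h]
    have : (1 + x ^ 2) ≠ 0 := by positivity
    rw [mul_zero, Real.exp_zero, neg_div_neg_eq, mul_one_div]
  · intro s hs
    have h := integrableOn_rpow_mul_exp_neg_mul_rpow (s := α - 1) (p := 2) (b := s)
      (by linarith) (by norm_num) hs
    refine IntegrableOn.congr_fun (h.const_mul (exp (-s))) (fun t ht => ?_) measurableSet_Ioi
    simp only [Real.rpow_two]
    rw [mul_left_comm, ← Real.exp_add]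
    ring_nf
  · intro s hs
    have h := integral_rpow_mul_exp_neg_mul_rpow (q := α - 1) (p := 2) (b := s)
      (by norm_num) (by linarith) hs
    have e : ∀ t : ℝ, t ^ (α - 1) * exp (-(1 + t ^ 2) * s)
        = exp (-s) * (t ^ (α - 1) * exp (-s * t ^ (2:ℝ))) := by
      intro t
      rw [Real.rpow_two, mul_left_comm, ← Real.exp_add]
      ring_nf
    simp_rw [e]
    rw [integral_const_mul, h]
    ring_nf
  · exact (Real.GammaIntegral_convergent (by linarith)).const_mul _
  · rw [integral_const_mul, ← Real.Gamma_eq_integral (by linarith)]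
    have := Real.Gamma_mul_Gamma_one_sub (α / 2)
    rw [div_mul_eq_mul_div, this, mul_div_assoc, div_div, mul_comm 2]

theorem integral_cos_aux (t : ℝ) (ht : 0 < t) :
    IntegrableOn (fun u : ℝ => (1 - Real.cos u) * exp (-t * u)) (Set.Ioi 0) ∧
    ∫ u in Set.Ioi (0 : ℝ), (1 - Real.cos u) * exp (-t * u) = 1 / (t * (1 + t ^ 2)) := by
  have hre : (-t + Complex.I : ℂ).re < 0 := by simpa using ht
  have i1 := integrableOn_exp_mul_Ioi (a := -t) (by linarith) 0
  have i2 := integrableOn_exp_mul_complex_Ioi hre 0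
  have v1 := integral_exp_mul_Ioi (a := -t) (by linarith) 0
  have v2 := integral_exp_mul_complex_Ioi hre 0
  have e : ∀ u : ℝ, (1 - Real.cos u) * exp (-t * u)
      = exp (-t * u) - RCLike.re (Complex.exp ((-t + Complex.I) * u)) := by
    intro u
    simp [Complex.exp_re]
    ring
  simp_rw [e]
  refine ⟨i1.sub i2.re, ?_⟩
  rw [integral_sub i1 i2.re, integral_re i2, v1, v2]
  have : 1 + t ^ 2 ≠ 0 := by positivity
  simp [Complex.div_re, Complex.normSq_apply]
  rw [show t * t + 1 = 1 + t ^ 2 by ring]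
  field_simp
  ring

/-- For every real `α` with `0 < α < 2`, the improper integral
`∫₀^∞ (1 − cos u)/u^{1+α} du` converges and equals `π / (2 Γ(α+1) sin(πα/2))`. -/
theorem integral_one_sub_cos_div_rpow (α : ℝ) (hα0 : 0 < α) (hα2 : α < 2) :
    IntegrableOn (fun u : ℝ => (1 - Real.cos u) / u ^ (1 + α)) (Set.Ioi 0) ∧
    ∫ u in Set.Ioi (0 : ℝ), (1 - Real.cos u) / u ^ (1 + α) =
      π / (2 * Real.Gamma (α + 1) * Real.sin (π * α / 2)) := by
  have hG : 0 < Real.Gamma (α + 1) := Real.Gamma_pos_of_pos (by linarith)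
  obtain ⟨hi, hv⟩ := integral_aux α hα0 hα2
  refine swap_aux
    (fun u t => (Real.Gamma (α + 1))⁻¹ * t ^ α * ((1 - Real.cos u) * exp (-t * u))) _
    (fun t => (Real.Gamma (α + 1))⁻¹ * (t ^ (α - 1) / (1 + t ^ 2))) _ (by fun_prop)
    ?_ ?_ ?_ ?_ ?_ ?_
  · intro u hu t ht
    have : 0 < t := ht
    have : 0 ≤ 1 - Real.cos u := by linarith [Real.cos_le_one u]
    positivity
  · intro u hu
    have h := Real.integral_rpow_mul_exp_neg_mul_Ioi (a := α + 1) (r := u) (by linarith) hu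
    have e : ∀ t : ℝ, (Real.Gamma (α + 1))⁻¹ * t ^ α * ((1 - Real.cos u) * exp (-t * u))
        = ((Real.Gamma (α + 1))⁻¹ * (1 - Real.cos u)) * (t ^ (α + 1 - 1) * exp (-(u * t))) := by
      intro t
      ring_nf
    simp_rw [e]
    rw [integral_const_mul, h, one_div, Real.inv_rpow (le_of_lt hu), add_comm 1 α]
    field_simp
  · intro t ht
    exact (integral_cos_aux t ht).1.const_mul _
  · intro t ht
    have ht' : 0 < t := ht
    rw [integral_const_mul, (integral_cos_aux t ht).2, Real.rpow_sub_one ht'.ne']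
    field_simp
  · exact hi.const_mul _
  · rw [integral_const_mul, hv, inv_mul_eq_div, div_div]
    ring_nf
end

section
/- Let α be real with 0 < α < 2. Define J_α(k) = Σ_{n ∈ ℤ, n ≠ 0} e^{−i k n}/|n|^{α+1}. Then the infrared (long-wave) limit holds: lim_{k → 0⁺} (J_α(0) − J_α(k))/k^α = 2 ∫₀^∞ (1 − cos u)/u^{1+α} du = π / (Γ(α+1) sin(πα/2)). -/
open Real Complex Filter MeasureTheory

/-- The lattice Fourier sum `J_α(k) = Σ_{n ∈ ℤ, n ≠ 0} e^{−i k n}/|n|^{α+1}`. -/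
noncomputable def latticeJ (α k : ℝ) : ℂ :=
  ∑' n : {n : ℤ // n ≠ 0}, Complex.exp (-Complex.I * k * (n : ℤ)) / (|(n : ℝ)| ^ (α + 1) : ℝ)

lemma hs_congr {E : Type*} [AddCommMonoid E] [TopologicalSpace E] {f g : ℕ → E} {a : E}
    (h : ∀ n, f n = g n) : HasSum f a ↔ HasSum g a := by rw [funext h]

lemma swap_lem (F : ℝ → ℝ → ℝ) (A B : ℝ → ℝ) (hF : Measurable (Function.uncurry F))
    (h0 : ∀ x > 0, ∀ y > 0, 0 ≤ F x y)
    (iA : ∀ x > 0, IntegrableOn (fun y => F x y) (Set.Ioi 0))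
    (hA : ∀ x > 0, ∫ y in Set.Ioi (0:ℝ), F x y = A x)
    (iB : ∀ y > 0, IntegrableOn (fun x => F x y) (Set.Ioi 0))
    (hB : ∀ y > 0, ∫ x in Set.Ioi (0:ℝ), F x y = B y)
    (mA : Measurable A) (mB : Measurable B) :
    ∫ x in Set.Ioi (0:ℝ), A x = ∫ y in Set.Ioi (0:ℝ), B y := by
  have A0 : ∀ x > 0, 0 ≤ A x := fun x hx => by
    rw [← hA x hx]; exact setIntegral_nonneg measurableSet_Ioi (fun y hy => h0 x hx y hy)
  have B0 : ∀ x > 0, 0 ≤ B x := fun x hx => by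
    rw [← hB x hx]; exact setIntegral_nonneg measurableSet_Ioi (fun y hy => h0 y hy x hx)
  rw [integral_eq_lintegral_of_nonneg_ae
      ((ae_restrict_iff' measurableSet_Ioi).2 (ae_of_all _ A0)) mA.aestronglyMeasurable,
    integral_eq_lintegral_of_nonneg_ae
      ((ae_restrict_iff' measurableSet_Ioi).2 (ae_of_all _ B0)) mB.aestronglyMeasurable]
  congr 1
  have e1 : ∫⁻ x in Set.Ioi (0:ℝ), ENNReal.ofReal (A x)
      = ∫⁻ x in Set.Ioi (0:ℝ), ∫⁻ y in Set.Ioi (0:ℝ), ENNReal.ofReal (F x y) := by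
    refine setLIntegral_congr_fun measurableSet_Ioi (fun x hx => ?_)
    rw [← hA x hx, ofReal_integral_eq_lintegral_ofReal (iA x hx)
      ((ae_restrict_iff' measurableSet_Ioi).2 (ae_of_all _ (h0 x hx)))]
  have e2 : ∫⁻ y in Set.Ioi (0:ℝ), ENNReal.ofReal (B y)
      = ∫⁻ y in Set.Ioi (0:ℝ), ∫⁻ x in Set.Ioi (0:ℝ), ENNReal.ofReal (F x y) := by
    refine setLIntegral_congr_fun measurableSet_Ioi (fun x hx => ?_)
    rw [← hB x hx, ofReal_integral_eq_lintegral_ofReal (iB x hx)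
      ((ae_restrict_iff' measurableSet_Ioi).2 (ae_of_all _ (fun y hy => h0 y hy x hx)))]
  rw [e1, e2]
  exact lintegral_lintegral_swap (hF.ennreal_ofReal.aemeasurable)

lemma beta_lem (α : ℝ) (h0 : 0 < α) (h2 : α < 2) :
    ∫ t in Set.Ioi (0:ℝ), t ^ (α - 1) / (1 + t ^ 2) = π / (2 * Real.sin (π * α / 2)) := by
  have key := swap_lem (fun t s => t ^ (α - 1) * Real.exp (-(1 + t ^ 2) * s))
    (fun t => t ^ (α - 1) / (1 + t ^ 2))
    (fun s => (1/2 * Real.Gamma (α / 2)) * (s ^ (-(α/2)) * Real.exp (-1 * s ^ (1:ℝ))))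
    (by unfold Function.uncurry; fun_prop)
    (fun x hx y hy => by positivity)
    (fun x hx => by
      exact (integrableOn_exp_mul_Ioi (by nlinarith [sq_nonneg x]) 0).const_mul _)
    (fun x hx => by
      rw [integral_const_mul, integral_exp_mul_Ioi (by nlinarith [sq_nonneg x])]
      have : (1 + x ^ 2) ≠ 0 := by positivity
      simp only [mul_zero, Real.exp_zero]
      rw [neg_div_neg_eq]; ring)
    (fun y hy => by
      have := (integrableOn_rpow_mul_exp_neg_mul_rpow (p := 2) (s := α - 1) (by linarith)
        (by norm_num) hy).const_mul (Real.exp (-y))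
      refine IntegrableOn.congr_fun this (fun x hx => ?_) measurableSet_Ioi
      simp only [Real.rpow_two]
      rw [mul_left_comm, ← Real.exp_add]; ring_nf)
    (fun y hy => by
      have := _root_.integral_rpow_mul_exp_neg_mul_rpow (p := 2) (q := α - 1) (b := y) (by norm_num)
        (by linarith) hy
      have e : ∫ x in Set.Ioi (0:ℝ), x ^ (α - 1) * Real.exp (-(1 + x ^ 2) * y)
        = Real.exp (-y) * ∫ x in Set.Ioi (0:ℝ), x ^ (α - 1) * Real.exp (-y * x ^ (2:ℝ)) := by
        rw [← integral_const_mul]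
        refine setIntegral_congr_fun measurableSet_Ioi (fun x hx => ?_)
        simp only [Real.rpow_two]
        rw [mul_left_comm, ← Real.exp_add]; ring_nf
      rw [e, this]
      simp only [Real.rpow_one, sub_add_cancel]
      ring_nf)
    (by fun_prop) (by fun_prop)
  rw [key, integral_const_mul, _root_.integral_rpow_mul_exp_neg_mul_rpow one_pos (by linarith) one_pos]
  have g := Real.Gamma_mul_Gamma_one_sub (α / 2)
  rw [show -(α/2) + 1 = 1 - α/2 by ring]
  simp only [Real.one_rpow, div_one, one_mul]
  rw [mul_assoc, g, ← mul_div_assoc π]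
  field_simp

lemma cos_lem (t : ℝ) (ht : 0 < t) :
    IntegrableOn (fun u => (1 - Real.cos u) * Real.exp (-t * u)) (Set.Ioi 0) ∧
    ∫ u in Set.Ioi (0:ℝ), (1 - Real.cos u) * Real.exp (-t * u) = 1 / (t * (1 + t ^ 2)) := by
  have hre : ((-t + Complex.I : ℂ)).re < 0 := by simpa using ht
  have i1 := integrableOn_exp_mul_complex_Ioi hre 0
  have v1 := integral_exp_mul_complex_Ioi hre 0
  have i2 := integrableOn_exp_mul_Ioi (a := -t) (by linarith) 0
  have v2 := integral_exp_mul_Ioi (a := -t) (by linarith) 0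
  have hc : ∀ u : ℝ, (Complex.exp ((-t + Complex.I) * u)).re = Real.cos u * Real.exp (-t * u) := by
    intro u
    rw [Complex.exp_re]; simp [mul_comm]
  have i3 : IntegrableOn (fun u => Real.cos u * Real.exp (-t * u)) (Set.Ioi 0) := by
    have := i1.re
    unfold IntegrableOn; simpa only [RCLike.re_to_complex, hc] using this
  have v3 : ∫ u in Set.Ioi (0:ℝ), Real.cos u * Real.exp (-t * u) = t / (1 + t ^ 2) := by
    have := integral_re i1
    simp only [RCLike.re_to_complex, hc] at this
    rw [this, v1]
    simp [Complex.normSq_apply, Complex.div_re]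
    ring_nf
  have e : (fun u => (1 - Real.cos u) * Real.exp (-t * u))
    = fun u => Real.exp (-t * u) - Real.cos u * Real.exp (-t * u) := by ext; ring
  rw [e]
  refine ⟨i2.sub i3, ?_⟩
  rw [integral_sub i2 i3, v2, v3]
  simp
  field_simp
  ring

lemma int_lem (α : ℝ) (h0 : 0 < α) (h2 : α < 2) :
    (2 * ∫ u in Set.Ioi (0 : ℝ), (1 - Real.cos u) / u ^ (1 + α) : ℝ) =
      π / (Real.Gamma (α + 1) * Real.sin (π * α / 2)) := by
  have hG : 0 < Real.Gamma (α + 1) := Real.Gamma_pos_of_pos (by linarith)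
  have key := swap_lem (fun u t => (1 - Real.cos u) * (t ^ α * Real.exp (-u * t)))
    (fun u => Real.Gamma (α + 1) * ((1 - Real.cos u) / u ^ (1 + α)))
    (fun t => t ^ α * (1 / (t * (1 + t ^ 2))))
    (by unfold Function.uncurry; fun_prop)
    (fun x hx y hy => by
      have := Real.cos_le_one x
      have : 0 ≤ 1 - Real.cos x := by linarith
      positivity)
    (fun x hx => by
      have := (integrableOn_rpow_mul_exp_neg_mul_rpow (p := 1) (s := α) (by linarith)
        (by norm_num) hx).const_mul (1 - Real.cos x)
      unfold IntegrableOn; simpa only [Real.rpow_one] using this)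
    (fun x hx => by
      have := _root_.integral_rpow_mul_exp_neg_mul_rpow (p := 1) (q := α) (b := x) (by norm_num)
        (by linarith) hx
      simp only [Real.rpow_one] at this
      rw [integral_const_mul, this, div_one, Real.rpow_neg hx.le, add_comm 1 α]
      simp only [div_one]
      ring)
    (fun y hy => by
      have := (cos_lem y hy).1.const_mul (y ^ α)
      refine IntegrableOn.congr_fun this (fun x hx => ?_) measurableSet_Ioi
      rw [show -x * y = -y * x by ring]; ring)
    (fun y hy => by
      rw [← (cos_lem y hy).2, ← integral_const_mul]
      refine setIntegral_congr_fun measurableSet_Ioi (fun x hx => ?_)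
      rw [show -x * y = -y * x by ring]; ring)
    (by fun_prop) (by fun_prop)
  have e : ∫ t in Set.Ioi (0:ℝ), t ^ α * (1 / (t * (1 + t ^ 2)))
      = ∫ t in Set.Ioi (0:ℝ), t ^ (α - 1) / (1 + t ^ 2) := by
    refine setIntegral_congr_fun measurableSet_Ioi (fun x hx => ?_)
    have hx : 0 < x := hx
    rw [Real.rpow_sub_one hx.ne']
    field_simp
  rw [e, beta_lem α h0 h2, integral_const_mul] at key
  have : ∫ u in Set.Ioi (0 : ℝ), (1 - Real.cos u) / u ^ (1 + α)
      = π / (2 * Real.sin (π * α / 2)) / Real.Gamma (α + 1) := by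
    rw [eq_div_iff hG.ne', mul_comm, key]
  rw [this]
  field_simp

lemma bound_lem (α : ℝ) (h0 : 0 < α) (h2 : α < 2) (u v : ℝ) (hu : 0 < u) (huv : u ≤ v)
    (hv : v ≤ u + 1) :
    ‖(1 - Real.cos v) / v ^ (1 + α)‖ ≤
      if u ≤ 1 then u ^ (1 - α) + 2 else 2 * u ^ (-(1 + α)) := by
  have hvp : 0 < v := by linarith
  have c1 := Real.cos_le_one v
  have c2 := Real.neg_one_le_cos v
  have c3 : 1 - v ^ 2 / 2 ≤ Real.cos v := Real.one_sub_sq_div_two_le_cos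
  have hp : 0 < v ^ (1 + α) := by positivity
  rw [Real.norm_of_nonneg (div_nonneg (by linarith) hp.le)]
  split_ifs with h
  · have e1 : (1 - Real.cos v) / v ^ (1 + α) ≤ v ^ (1 - α) := by
      rw [div_le_iff₀ hp, ← Real.rpow_add hvp, show 1 - α + (1 + α) = (2:ℝ) by ring, Real.rpow_two]
      nlinarith [sq_nonneg v]
    refine e1.trans ?_
    have hup : 0 ≤ u ^ (1 - α) := by positivity
    rcases le_total 1 α with ha | ha
    · have := Real.rpow_le_rpow_of_nonpos hu huv (show 1 - α ≤ 0 by linarith)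
      linarith
    · have a1 := Real.rpow_le_rpow hvp.le (show v ≤ 2 by linarith) (show 0 ≤ 1 - α by linarith)
      have a2 := Real.rpow_le_rpow_of_exponent_le (show (1:ℝ) ≤ 2 by norm_num)
        (show 1 - α ≤ 1 by linarith)
      rw [Real.rpow_one] at a2
      linarith
  · rw [div_eq_mul_inv, ← Real.rpow_neg hvp.le]
    have a1 := Real.rpow_le_rpow_of_nonpos hu huv (show -(1 + α) ≤ 0 by linarith)
    have : 0 ≤ v ^ (-(1 + α)) := by positivity
    calc _ ≤ 2 * v ^ (-(1 + α)) := by gcongr; linarith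
      _ ≤ _ := by gcongr

lemma bound_int (α : ℝ) (h0 : 0 < α) (h2 : α < 2) :
    IntegrableOn (fun u : ℝ => if u ≤ 1 then u ^ (1 - α) + 2 else 2 * u ^ (-(1 + α)))
      (Set.Ioi 0) := by
  rw [← Set.Ioc_union_Ioi_eq_Ioi (zero_le_one' ℝ)]
  refine IntegrableOn.union ?_ ?_
  · have : IntegrableOn (fun u : ℝ => u ^ (1 - α) + 2) (Set.Ioc 0 1) := by
      rw [← intervalIntegrable_iff_integrableOn_Ioc_of_le zero_le_one]
      exact (intervalIntegral.intervalIntegrable_rpow' (by linarith)).add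
        intervalIntegrable_const
    refine this.congr_fun (fun u hu => ?_) measurableSet_Ioc
    simp [hu.2]
  · have : IntegrableOn (fun u : ℝ => 2 * u ^ (-(1 + α))) (Set.Ioi 1) :=
      (integrableOn_Ioi_rpow_of_lt (by linarith) one_pos).const_mul 2
    refine this.congr_fun (fun u hu => ?_) measurableSet_Ioi
    have hu : 1 < u := hu
    simp [not_le.2 hu]

lemma ceil_lem (k u : ℝ) (hk : 0 < k) (hu : 0 < u) :
    u ≤ k * (⌈u / k⌉₊ : ℝ) ∧ k * (⌈u / k⌉₊ : ℝ) ≤ u + k := by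
  have a := Nat.le_ceil (u / k)
  have b := Nat.ceil_lt_add_one (div_pos hu hk).le
  constructor
  · rw [div_le_iff₀ hk] at a; linarith
  · have : k * (⌈u / k⌉₊ : ℝ) ≤ k * (u / k + 1) := by gcongr
    rw [mul_add, mul_div_cancel₀ _ hk.ne', mul_one] at this
    exact this

lemma meas_lem (α k : ℝ) : Measurable (fun u : ℝ =>
    (1 - Real.cos (k * (⌈u / k⌉₊ : ℝ))) / (k * (⌈u / k⌉₊ : ℝ)) ^ (1 + α)) := by
  have : Measurable (fun u : ℝ => k * (⌈u / k⌉₊ : ℝ)) := by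
    have h1 : Measurable (fun u : ℝ => ⌈u / k⌉₊) := Nat.measurable_ceil.comp (by fun_prop)
    have h2 : Measurable (fun n : ℕ => (n : ℝ)) := measurable_from_nat
    exact (h2.comp h1).const_mul k
  fun_prop

lemma step_int (α : ℝ) (h0 : 0 < α) (h2 : α < 2) (k : ℝ) (hk : 0 < k) (hk1 : k ≤ 1) :
    HasSum (fun n : ℕ => k * ((1 - Real.cos (k * (n + 1))) / (k * (n + 1)) ^ (1 + α)))
      (∫ u in Set.Ioi (0:ℝ),
        (1 - Real.cos (k * (⌈u / k⌉₊ : ℝ))) / (k * (⌈u / k⌉₊ : ℝ)) ^ (1 + α)) := by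
  set g : ℝ → ℝ := fun u =>
    (1 - Real.cos (k * (⌈u / k⌉₊ : ℝ))) / (k * (⌈u / k⌉₊ : ℝ)) ^ (1 + α) with hg
  have hi : IntegrableOn g (Set.Ioi 0) := by
    refine Integrable.mono' (bound_int α h0 h2) (meas_lem α k).aestronglyMeasurable ?_
    refine (ae_restrict_iff' measurableSet_Ioi).2 (ae_of_all _ fun u hu => ?_)
    have c := ceil_lem k u hk hu
    exact bound_lem α h0 h2 u _ hu c.1 (by linarith)
  have hmem : ∀ (n : ℕ) (u : ℝ), u ∈ Set.Ioc (k * n) (k * (n + 1)) ↔ ⌈u / k⌉₊ = n + 1 := by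
    intro n u
    rw [Nat.ceil_eq_iff (by omega), lt_div_iff₀ hk, div_le_iff₀ hk]
    simp [mul_comm]
  have hU : (⋃ n : ℕ, Set.Ioc (k * n) (k * (n + 1))) = Set.Ioi (0:ℝ) := by
    ext u
    simp only [Set.mem_iUnion, hmem, Set.mem_Ioi]
    constructor
    · rintro ⟨n, hn⟩
      have : 0 < ⌈u / k⌉₊ := by omega
      rw [Nat.ceil_pos] at this
      exact (div_pos_iff_of_pos_right hk).1 this
    · intro hu
      have : 0 < ⌈u / k⌉₊ := Nat.ceil_pos.2 (div_pos hu hk)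
      exact ⟨⌈u / k⌉₊ - 1, by omega⟩
  have hs := hasSum_integral_iUnion (μ := volume) (f := g)
    (s := fun n : ℕ => Set.Ioc (k * n) (k * (n + 1)))
    (fun _ => measurableSet_Ioc)
    (by
      intro m n hmn
      refine Set.disjoint_left.2 fun u hm hn => hmn ?_
      have a := (hmem m u).1 hm
      have b := (hmem n u).1 hn
      omega)
    (by rw [hU]; exact hi)
  rw [hU] at hs
  refine (hs_congr fun n => ?_).2 hs
  have : ∫ x in Set.Ioc (k * (n:ℝ)) (k * (n + 1)), g x
    = ∫ x in Set.Ioc (k * (n:ℝ)) (k * (n + 1)),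
      (1 - Real.cos (k * (n + 1))) / (k * (n + 1)) ^ (1 + α) := by
    refine setIntegral_congr_fun measurableSet_Ioc fun u hu => ?_
    have := (hmem n u).1 hu
    simp [hg, this]
  rw [this, setIntegral_const]
  have hvol : volume.real (Set.Ioc (k * (n:ℝ)) (k * (n + 1))) = k := by
    rw [Real.volume_real_Ioc_of_le (by nlinarith)]; ring
  rw [hvol, smul_eq_mul]

lemma limit_lem (α : ℝ) (h0 : 0 < α) (h2 : α < 2) :
    Tendsto (fun k : ℝ => ∫ u in Set.Ioi (0:ℝ),
        (1 - Real.cos (k * (⌈u / k⌉₊ : ℝ))) / (k * (⌈u / k⌉₊ : ℝ)) ^ (1 + α))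
      (nhdsWithin 0 (Set.Ioi 0))
      (nhds (∫ u in Set.Ioi (0 : ℝ), (1 - Real.cos u) / u ^ (1 + α))) := by
  have hk : ∀ᶠ k : ℝ in nhdsWithin 0 (Set.Ioi 0), 0 < k ∧ k ≤ 1 := by
    filter_upwards [Ioc_mem_nhdsGT (zero_lt_one' ℝ)] with k hk using hk
  refine tendsto_integral_filter_of_dominated_convergence _ ?_ ?_ (bound_int α h0 h2) ?_
  · exact Eventually.of_forall fun k => (meas_lem α k).aestronglyMeasurable
  · filter_upwards [hk] with k hk
    refine (ae_restrict_iff' measurableSet_Ioi).2 (ae_of_all _ fun u hu => ?_)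
    have c := ceil_lem k u hk.1 hu
    exact bound_lem α h0 h2 u _ hu c.1 (by linarith [hk.2])
  · refine (ae_restrict_iff' measurableSet_Ioi).2 (ae_of_all _ fun u hu => ?_)
    have hu : 0 < u := hu
    have hv : Tendsto (fun k : ℝ => k * (⌈u / k⌉₊ : ℝ)) (nhdsWithin 0 (Set.Ioi 0)) (nhds u) := by
      have h1 : Tendsto (fun k : ℝ => u + k) (nhdsWithin 0 (Set.Ioi 0)) (nhds u) := by
        have : Tendsto (fun k : ℝ => u + k) (nhds 0) (nhds (u + 0)) :=
          (continuous_const.add continuous_id).tendsto 0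
        rw [add_zero] at this
        exact this.mono_left nhdsWithin_le_nhds
      refine tendsto_of_tendsto_of_tendsto_of_le_of_le' tendsto_const_nhds h1 ?_ ?_
      · filter_upwards [hk] with k hk using (ceil_lem k u hk.1 hu).1
      · filter_upwards [hk] with k hk using (ceil_lem k u hk.1 hu).2
    have hc : ContinuousAt (fun v : ℝ => (1 - Real.cos v) / v ^ (1 + α)) u := by
      refine ContinuousAt.div (by fun_prop) ?_ (by positivity)
      exact Real.continuousAt_rpow_const _ _ (Or.inl hu.ne')
    exact hc.tendsto.comp hv

lemma lattice_lem (α : ℝ) (h0 : 0 < α) (h2 : α < 2) (k : ℝ) (hk : 0 < k) (hk1 : k ≤ 1) :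
    (latticeJ α 0 - latticeJ α k) / ((k ^ α : ℝ) : ℂ) =
      ((2 * ∫ u in Set.Ioi (0:ℝ),
        (1 - Real.cos (k * (⌈u / k⌉₊ : ℝ))) / (k * (⌈u / k⌉₊ : ℝ)) ^ (1 + α) : ℝ) : ℂ) := by
  have hne : α + 1 ≠ 0 := by linarith
  have hsum : ∀ κ : ℝ, HasSum (fun n : ℤ =>
      Complex.exp (-Complex.I * κ * (n : ℤ)) / (|(n : ℝ)| ^ (α + 1) : ℝ)) (latticeJ α κ) := by
    intro κ
    have hs : Summable (fun n : ℤ =>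
      Complex.exp (-Complex.I * κ * (n : ℤ)) / ((|(n : ℝ)| ^ (α + 1) : ℝ) : ℂ)) := by
      refine Summable.of_norm ?_
      refine (Real.summable_abs_int_rpow (b := α + 1) (by linarith)).congr fun n => ?_
      rw [norm_div, Complex.norm_exp, Complex.norm_real, Real.norm_of_nonneg (by positivity),
        Real.rpow_neg (abs_nonneg _)]
      simp
    have e : latticeJ α κ = ∑' n : ℤ,
      Complex.exp (-Complex.I * κ * (n : ℤ)) / ((|(n : ℝ)| ^ (α + 1) : ℝ) : ℂ) := by
      unfold latticeJ
      refine tsum_subtype_eq_of_support_subset (s := {n : ℤ | n ≠ 0})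
        (f := fun n : ℤ =>
          Complex.exp (-Complex.I * κ * (n : ℤ)) / ((|(n : ℝ)| ^ (α + 1) : ℝ) : ℂ)) ?_
      intro n hn hn0
      apply hn
      simp [hn0, Real.zero_rpow hne]
    rw [e]
    exact hs.hasSum
  have hd := ((hsum 0).sub (hsum k)).nat_add_neg
  have hst := step_int α h0 h2 k hk hk1
  set I := ∫ u in Set.Ioi (0:ℝ),
        (1 - Real.cos (k * (⌈u / k⌉₊ : ℝ))) / (k * (⌈u / k⌉₊ : ℝ)) ^ (1 + α)
  have hst2 := (Complex.hasSum_ofReal.2 (hst.mul_left (2 * k ^ α)))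
  have hz : (0:ℝ) ^ (α + 1) = 0 := Real.zero_rpow hne
  have hd2 := (hasSum_nat_add_iff' 1).2 hd
  have hu : latticeJ α 0 - latticeJ α k = ((2 * k ^ α * I : ℝ) : ℂ) := by
    have hU := hd2.unique ((hs_congr fun n => ?_).2 hst2)
    · rw [← hU]; simp [hz]
    · symm
      have hn : (0:ℝ) < n + 1 := by positivity
      have e1 : |(n:ℝ) + 1| = n + 1 := abs_of_pos hn
      have e3 : |-1 + -(n:ℝ)| = n + 1 := by rw [← abs_neg, ← e1]; congr 1; ring
      have e2 : 2 * k ^ α * (k * ((1 - Real.cos (k * (n + 1))) / (k * (n + 1)) ^ (1 + α)))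
        = 2 * (1 - Real.cos (k * (n + 1))) / (n + 1) ^ (α + 1) := by
        rw [Real.mul_rpow hk.le hn.le, add_comm 1 α, Real.rpow_add_one hk.ne']
        have := (Real.rpow_pos_of_pos hk α).ne'
        have := (Real.rpow_pos_of_pos hn (α + 1)).ne'
        field_simp
      rw [e2]
      have e4 : ((Real.cos (k * (n + 1)) : ℝ) : ℂ) =
        (Complex.exp (-Complex.I * k * (n + 1)) + Complex.exp (Complex.I * k * (n + 1))) / 2 := by
        push_cast
        rw [Complex.cos]; ring_nf
      push_cast [e4]
      simp only [e1, e3, neg_add_rev, Complex.ofReal_div, Complex.ofReal_mul, Complex.ofReal_sub, e4]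
      simp
      ring_nf
  have hkα : ((k ^ α : ℝ) : ℂ) ≠ 0 := Complex.ofReal_ne_zero.2 (by positivity)
  rw [hu, div_eq_iff hkα]
  push_cast
  ring

theorem infrared_limit (α : ℝ) (hα0 : 0 < α) (hα2 : α < 2) :
    Tendsto (fun k : ℝ => (latticeJ α 0 - latticeJ α k) / ((k ^ α : ℝ) : ℂ))
      (nhdsWithin 0 (Set.Ioi 0))
      (nhds ((2 * ∫ u in Set.Ioi (0 : ℝ), (1 - Real.cos u) / u ^ (1 + α) : ℝ) : ℂ)) ∧
    (2 * ∫ u in Set.Ioi (0 : ℝ), (1 - Real.cos u) / u ^ (1 + α) : ℝ) =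
      π / (Real.Gamma (α + 1) * Real.sin (π * α / 2)) := by
  refine ⟨?_, int_lem α hα0 hα2⟩
  have h := (Complex.continuous_ofReal.tendsto _).comp ((limit_lem α hα0 hα2).const_mul 2)
  refine h.congr' ?_
  filter_upwards [Ioc_mem_nhdsGT (zero_lt_one' ℝ)] with k hk
  exact (lattice_lem α hα0 hα2 k hk.1 hk.2).symm
end

section
/- Let α be real with 0 < α ≤ 2. Then for every real θ, the series Σ_{k ∈ ℤ} w_k^α e^{i k θ} converges absolutely and equals (2 − 2 cos θ)^{α/2} = |2 sin(θ/2)|^α, where w_k^α = (−1)^k Γ(α+1) / (Γ(α/2 − k + 1) Γ(α/2 + k + 1)). -/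
open Real Complex

/-- The fractional centered-difference weights
`w_k^α = (−1)^k Γ(α+1) / (Γ(α/2 − k + 1) Γ(α/2 + k + 1))`. -/
noncomputable def fracWeight (α : ℝ) (k : ℤ) : ℝ :=
  (-1 : ℝ) ^ k * Real.Gamma (α + 1) /
    (Real.Gamma (α / 2 - k + 1) * Real.Gamma (α / 2 + k + 1))


/-- recurrence for the weights -/
lemma fracWeight_rec (α : ℝ) (k : ℤ) :
    ((k : ℝ) + 1 + α / 2) * fracWeight α (k + 1) = (k - α / 2) * fracWeight α k := by
  unfold fracWeight
  have e1 : α / 2 - ((k + 1 : ℤ) : ℝ) + 1 = α / 2 - k := by push_cast; ring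
  have e2 : α / 2 + ((k + 1 : ℤ) : ℝ) + 1 = (α / 2 + k + 1) + 1 := by push_cast; ring
  rw [e1, e2, zpow_add_one₀ (by norm_num)]
  by_cases h1 : α / 2 - k = 0
  · rw [h1]
    have : (k : ℝ) - α / 2 = 0 := by linarith
    rw [this]; simp
  by_cases h2 : α / 2 + k + 1 = 0
  · rw [h2]
    have : (k : ℝ) + 1 + α / 2 = 0 := by linarith
    rw [this]; simp
  rw [Real.Gamma_add_one h1, Real.Gamma_add_one h2]
  have h3 : (k : ℝ) + 1 + α / 2 = α / 2 + k + 1 := by ring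
  have h4 : (k : ℝ) - α / 2 = -(α / 2 - k) := by ring
  rw [h3, h4]
  generalize α / 2 - k = x at *
  generalize α / 2 + k + 1 = y at *
  rw [div_eq_mul_inv, div_eq_mul_inv, mul_inv, mul_inv, mul_inv, mul_inv]
  have hx : x * x⁻¹ = 1 := mul_inv_cancel₀ h1
  have hy : y * y⁻¹ = 1 := mul_inv_cancel₀ h2
  linear_combination
    (-(-1 : ℝ) ^ k * Real.Gamma (α + 1) * (Real.Gamma x)⁻¹ * (Real.Gamma y)⁻¹) * (hy - hx)

lemma fracWeight_neg (α : ℝ) (k : ℤ) : fracWeight α (-k) = fracWeight α k := by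
  unfold fracWeight
  push_cast
  rw [zpow_neg, ← inv_zpow, sub_neg_eq_add, ← sub_eq_add_neg, mul_comm (Real.Gamma (α / 2 + k + 1))]
  norm_num

lemma fracWeight_nat_summable (α : ℝ) (hα0 : 0 < α) (hα2 : α ≤ 2) :
    Summable (fun n : ℕ => fracWeight α n) := by
  have hrec : ∀ n : ℕ, ((n : ℝ) + 1 + α / 2) * fracWeight α ((n + 1 : ℕ) : ℤ)
      = (n - α / 2) * fracWeight α (n : ℤ) := by
    intro n
    have := fracWeight_rec α n
    push_cast at this ⊢
    exact this
  have h0 : 0 ≤ fracWeight α 0 := by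
    unfold fracWeight
    have := Real.Gamma_pos_of_pos (show (0:ℝ) < α + 1 by linarith)
    have := Real.Gamma_pos_of_pos (show (0:ℝ) < α / 2 + 1 by linarith)
    simp
    positivity
  have hneg : ∀ n : ℕ, fracWeight α ((n + 1 : ℕ) : ℤ) ≤ 0 := by
    intro n
    induction n with
    | zero =>
      have := hrec 0
      push_cast at this ⊢
      by_contra! h
      have : 0 < (0 + 1 + α / 2) * fracWeight α (0 + 1) := by positivity
      nlinarith
    | succ n ih =>
      have := hrec (n + 1)
      push_cast at this ih ⊢
      by_contra! h
      have h2 : 0 < ((n : ℝ) + 1 + 1 + α / 2) * fracWeight α (n + 1 + 1) := by positivity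
      have h3 : 0 ≤ (n + 1 - α / 2) := by have : (0:ℝ) ≤ n := by positivity
                                          linarith
      nlinarith [mul_nonneg h3 (neg_nonneg.2 ih)]
  rw [← summable_nat_add_iff 1, ← summable_neg_iff]
  have tel : ∀ N : ℕ, α * ∑ i ∈ Finset.range N, (- fracWeight α ((i + 1 : ℕ) : ℤ))
      = ((N + 1 : ℕ) + α / 2) * fracWeight α ((N + 1 : ℕ) : ℤ)
        - (1 + α / 2) * fracWeight α ((1 : ℕ) : ℤ) := by
    intro N
    induction N with
    | zero => simp
    | succ N ih =>
      rw [Finset.sum_range_succ, mul_add, ih]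
      have := hrec (N + 1)
      push_cast at this ⊢
      linear_combination -this
  refine summable_of_sum_range_le (c := (- (1 + α / 2) * fracWeight α ((1 : ℕ) : ℤ)) / α)
    (fun n => by simpa using hneg n) ?_
  intro N
  rw [le_div_iff₀ hα0, mul_comm, tel]
  have : ((N + 1 : ℕ) + α / 2) * fracWeight α ((N + 1 : ℕ) : ℤ) ≤ 0 :=
    mul_nonpos_of_nonneg_of_nonpos (by positivity) (hneg N)
  linarith

lemma fracWeight_summable (α : ℝ) (hα0 : 0 < α) (hα2 : α ≤ 2) :
    Summable (fun k : ℤ => fracWeight α k) := by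
  have h := fracWeight_nat_summable α hα0 hα2
  refine Summable.of_nat_of_neg h ?_
  simpa [fracWeight_neg] using h

lemma two_sub_two_cos (θ : ℝ) : 2 - 2 * Real.cos θ = (2 * Real.sin (θ / 2)) ^ 2 := by
  have := Real.cos_sq (θ / 2)
  have h2 := Real.sin_sq_add_cos_sq (θ / 2)
  rw [show 2 * (θ / 2) = θ by ring] at this
  linarith

lemma symbol_eq (α θ : ℝ) :
    ((2 - 2 * Real.cos θ) ^ (α / 2) : ℝ) = |2 * Real.sin (θ / 2)| ^ α := by
  rw [two_sub_two_cos, ← sq_abs, ← Real.rpow_natCast, ← Real.rpow_mul (abs_nonneg _)]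
  congr 1
  push_cast; ring

/-- unnormalised Fourier coefficients of the symbol -/
noncomputable def symInt (α : ℝ) (k : ℤ) : ℂ :=
  ∫ θ in (0 : ℝ)..(2 * π), Complex.exp (-(Complex.I * k) * θ) *
    (((2 - 2 * Real.cos θ) ^ (α / 2) : ℝ) : ℂ)

lemma symbol_continuous (α : ℝ) (hα0 : 0 < α) :
    Continuous (fun θ : ℝ => ((2 - 2 * Real.cos θ) ^ (α / 2) : ℝ)) := by
  refine Continuous.rpow_const (by fun_prop) (fun x => Or.inr (by positivity))

lemma hasDerivAt_cexp_mul (m : ℂ) (θ : ℝ) :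
    HasDerivAt (fun t : ℝ => Complex.exp (m * t)) (m * Complex.exp (m * θ)) θ := by
  have h : HasDerivAt (fun t : ℂ => Complex.exp (m * t)) (Complex.exp (m * θ) * (m * 1)) (θ : ℂ) :=
    ((hasDerivAt_id (θ : ℂ)).const_mul m).cexp
  have := h.comp_ofReal
  convert this using 1
  ring

lemma symInt_rec (α : ℝ) (hα0 : 0 < α) (k : ℤ) :
    ((k : ℂ) + 1 + (α / 2 : ℝ)) * symInt α (k + 1) = (k - (α / 2 : ℝ)) * symInt α k := by
  have hF := symbol_continuous α hα0
  have hFc : Continuous (fun θ : ℝ => (((2 - 2 * Real.cos θ) ^ (α / 2) : ℝ) : ℂ)) :=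
    Complex.continuous_ofReal.comp hF
  have hE : ∀ m : ℂ, Continuous (fun θ : ℝ => Complex.exp (m * θ)) := fun m => by fun_prop
  set E : ℤ → ℝ → ℂ := fun k θ => Complex.exp (-(Complex.I * k) * θ) with hEdef
  have hEsucc : ∀ θ : ℝ, E (k + 1) θ = E k θ * Complex.exp (-Complex.I * θ) := by
    intro θ
    simp only [hEdef]
    rw [← Complex.exp_add]; congr 1; push_cast; ring
  have key := intervalIntegral.integral_eq_sub_of_hasDerivAt_of_le
    (f := fun θ : ℝ => (E k θ - E (k + 1) θ) * (((2 - 2 * Real.cos θ) ^ (α / 2) : ℝ) : ℂ))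
    (f' := fun θ : ℝ => -Complex.I * (k - (α / 2 : ℝ)) *
        (E k θ * (((2 - 2 * Real.cos θ) ^ (α / 2) : ℝ) : ℂ))
      + Complex.I * ((k : ℂ) + 1 + (α / 2 : ℝ)) *
        (E (k + 1) θ * (((2 - 2 * Real.cos θ) ^ (α / 2) : ℝ) : ℂ)))
    (a := 0) (b := 2 * π) (by positivity)
    (Continuous.continuousOn (by fun_prop)) ?_
    (Continuous.intervalIntegrable (by fun_prop) _ _)
  · have i1 : ∀ j : ℤ, IntervalIntegrable (fun θ : ℝ =>
        (E j θ * (((2 - 2 * Real.cos θ) ^ (α / 2) : ℝ) : ℂ))) MeasureTheory.volume 0 (2 * π) :=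
      fun j => Continuous.intervalIntegrable (by fun_prop) _ _
    rw [intervalIntegral.integral_add ((i1 _).const_mul _) ((i1 _).const_mul _),
      intervalIntegral.integral_const_mul, intervalIntegral.integral_const_mul] at key
    have z : (0 : ℝ) ^ (α / 2) = 0 := Real.zero_rpow (by positivity)
    simp only [Real.cos_two_pi, Real.cos_zero, mul_one, sub_self, z, Complex.ofReal_zero,
      mul_zero] at key
    change -Complex.I * (k - (α / 2 : ℝ)) * symInt α k +
      Complex.I * ((k : ℂ) + 1 + (α / 2 : ℝ)) * symInt α (k + 1) = 0 at key
    have hI : Complex.I ≠ 0 := Complex.I_ne_zero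
    apply mul_left_cancel₀ hI
    linear_combination key
  · intro θ hθ
    have hs : 0 < Real.sin (θ / 2) :=
      Real.sin_pos_of_pos_of_lt_pi (by linarith [hθ.1]) (by linarith [hθ.2])
    have hP : 0 < 2 - 2 * Real.cos θ := by rw [two_sub_two_cos]; positivity
    have d1 : HasDerivAt (fun θ : ℝ => 2 - 2 * Real.cos θ) (2 * Real.sin θ) θ := by
      exact (((Real.hasDerivAt_cos θ).const_mul 2).const_sub 2).congr_deriv (by ring)
    have d2 := (d1.rpow_const (p := α / 2) (Or.inl hP.ne')).ofReal_comp
    have d3 := ((hasDerivAt_cexp_mul (-(Complex.I * k)) θ).sub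
      (hasDerivAt_cexp_mul (-(Complex.I * (k + 1 : ℤ))) θ)).mul d2
    refine d3.congr_deriv ?_
    change (-(Complex.I * k) * E k θ - -(Complex.I * (k + 1 : ℤ)) * E (k + 1) θ) * _
      + (E k θ - E (k + 1) θ) * _ = _
    rw [hEsucc]
    have hpow : (2 - 2 * Real.cos θ) ^ (α / 2)
        = (2 - 2 * Real.cos θ) * (2 - 2 * Real.cos θ) ^ (α / 2 - 1) := by
      rw [Real.rpow_sub_one hP.ne', mul_div_cancel₀ _ hP.ne']
    have hexp : Complex.exp (-Complex.I * θ) = Real.cos θ - Real.sin θ * Complex.I := by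
      rw [show -Complex.I * θ = ((-θ : ℝ) : ℂ) * Complex.I by push_cast; ring,
        Complex.exp_mul_I, ← Complex.ofReal_cos, ← Complex.ofReal_sin]
      simp; ring
    have hcs : (Real.sin θ : ℂ) ^ 2 + (Real.cos θ : ℂ) ^ 2 = 1 := by
      exact_mod_cast Real.sin_sq_add_cos_sq θ
    rw [hexp, hpow]
    generalize E k θ = e
    generalize (2 - 2 * Real.cos θ) ^ (α / 2 - 1) = p
    push_cast
    rw [← Complex.ofReal_cos, ← Complex.ofReal_sin]
    generalize (Real.sin θ : ℂ) = s at *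
    generalize (Real.cos θ : ℂ) = c at *
    have hI : Complex.I ^ 2 = -1 := Complex.I_sq
    linear_combination (e * p * α * Complex.I) * hcs - (e * p * α * s * (c - 1)) * hI

lemma symInt_zero (α : ℝ) (hα0 : 0 < α) :
    symInt α 0 = ((2 * π * fracWeight α 0 : ℝ) : ℂ) := by
  have hF := symbol_continuous α hα0
  have hbeta := ProbabilityTheory.beta_eq_betaIntegralReal (α / 2 + 1 / 2) (1 / 2)
    (by positivity) (by positivity)
  -- the half integral
  have hsub := MeasureTheory.integral_image_eq_integral_abs_deriv_smul
    (s := Set.Ioo 0 π) (f := fun θ => (1 - Real.cos θ) / 2) (f' := fun θ => Real.sin θ / 2)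
    measurableSet_Ioo
    (fun θ _ => by
      have := ((Real.hasDerivAt_cos θ).const_sub 1).div_const 2
      simp only [neg_neg] at this
      exact this.hasDerivWithinAt)
    (by
      intro x hx y hy hxy
      have : Real.cos x = Real.cos y := by
        simp only at hxy; linarith
      exact Real.injOn_cos (Set.Ioo_subset_Icc_self hx) (Set.Ioo_subset_Icc_self hy) this)
    (fun x : ℝ => (x : ℂ) ^ (((α / 2 + 1 / 2 : ℝ) : ℂ) - 1) *
      (1 - (x : ℂ)) ^ (((1 / 2 : ℝ) : ℂ) - 1))
  have himg : (fun θ => (1 - Real.cos θ) / 2) '' Set.Ioo 0 π = Set.Ioo 0 1 := by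
    ext x
    constructor
    · rintro ⟨θ, hθ, rfl⟩
      have h1 : Real.cos θ < 1 := by
        have := Real.cos_lt_cos_of_nonneg_of_le_pi le_rfl hθ.2.le hθ.1
        simpa using this
      have h2 : -1 < Real.cos θ := by
        have := Real.cos_lt_cos_of_nonneg_of_le_pi hθ.1.le le_rfl hθ.2
        simpa using this
      constructor <;> simp only <;> linarith
    · rintro ⟨h0, h1⟩
      refine ⟨Real.arccos (1 - 2 * x), ⟨Real.arccos_pos.2 (by linarith), ?_⟩, ?_⟩
      · exact Real.arccos_lt_pi.2 (by linarith)
      · simp only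
        rw [Real.cos_arccos (by linarith) (by linarith)]; ring
  have hpt : ∀ θ ∈ Set.Ioo 0 π, |Real.sin θ / 2| •
      ((((1 - Real.cos θ) / 2 : ℝ) : ℂ) ^ (((α / 2 + 1 / 2 : ℝ) : ℂ) - 1) *
      (1 - (((1 - Real.cos θ) / 2 : ℝ) : ℂ)) ^ (((1 / 2 : ℝ) : ℂ) - 1))
      = (((4 : ℝ) ^ (-(α / 2)) * (2 - 2 * Real.cos θ) ^ (α / 2) : ℝ) : ℂ) := by
    intro θ hθ
    have hs : 0 < Real.sin θ := Real.sin_pos_of_pos_of_lt_pi hθ.1 hθ.2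
    have hx : (1 - Real.cos θ) / 2 ∈ Set.Ioo (0 : ℝ) 1 := himg ▸ ⟨θ, hθ, rfl⟩
    have hsx : Real.sin θ / 2 = ((1 - Real.cos θ) / 2) ^ (1 / 2 : ℝ) *
        (1 - (1 - Real.cos θ) / 2) ^ (1 / 2 : ℝ) := by
      rw [← Real.mul_rpow hx.1.le (by linarith [hx.2]), ← Real.sqrt_eq_rpow, eq_comm,
        Real.sqrt_eq_iff_mul_self_eq_of_pos (by positivity)]
      have := Real.sin_sq_add_cos_sq θ
      linear_combination (1 / 4) * this
    have h4 : 2 - 2 * Real.cos θ = 4 * ((1 - Real.cos θ) / 2) := by ring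
    rw [abs_of_pos (by positivity), h4, hsx]
    generalize (1 - Real.cos θ) / 2 = x at *
    have hx1 : 0 < 1 - x := by linarith [hx.2]
    rw [Real.mul_rpow (by norm_num) hx.1.le, ← mul_assoc, ← Real.rpow_add (by norm_num)]
    rw [Complex.real_smul, ← Complex.ofReal_one, ← Complex.ofReal_sub, ← Complex.ofReal_sub,
      ← Complex.ofReal_sub, ← Complex.ofReal_cpow hx.1.le, ← Complex.ofReal_cpow hx1.le,
      ← Complex.ofReal_mul, ← Complex.ofReal_mul]
    congr 1
    have e1 : x ^ (α / 2) = x ^ (1 / 2 : ℝ) * x ^ (α / 2 + 1 / 2 - 1) := by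
      rw [← Real.rpow_add hx.1]; congr 1; ring
    have e2 : (1 - x) ^ (1 / 2 : ℝ) * (1 - x) ^ (1 / 2 - 1 : ℝ) = 1 := by
      rw [← Real.rpow_add hx1]; norm_num
    rw [e1]
    simp only [neg_add_cancel, Real.rpow_zero, one_mul]
    linear_combination (x ^ (1 / 2 : ℝ) * x ^ (α / 2 + 1 / 2 - 1)) * e2
  rw [himg, MeasureTheory.setIntegral_congr_fun measurableSet_Ioo hpt,
    ← MeasureTheory.integral_Ioc_eq_integral_Ioo, ← MeasureTheory.integral_Ioc_eq_integral_Ioo,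
    ← intervalIntegral.integral_of_le zero_le_one,
    ← intervalIntegral.integral_of_le Real.pi_pos.le] at hsub
  change Complex.betaIntegral _ _ = _ at hsub
  rw [hsub, intervalIntegral.integral_ofReal, Complex.ofReal_re,
    intervalIntegral.integral_const_mul] at hbeta
  -- full integral
  have hfull : symInt α 0 =
      ((2 * ∫ θ in (0 : ℝ)..π, (2 - 2 * Real.cos θ) ^ (α / 2) : ℝ) : ℂ) := by
    unfold symInt
    simp only [Int.cast_zero, mul_zero, neg_zero, zero_mul, Complex.exp_zero, one_mul]
    rw [intervalIntegral.integral_ofReal]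
    congr 1
    rw [← intervalIntegral.integral_add_adjacent_intervals (b := π)
      (hF.intervalIntegrable _ _) (hF.intervalIntegrable _ _)]
    have := intervalIntegral.integral_comp_sub_left
      (fun θ : ℝ => (2 - 2 * Real.cos θ) ^ (α / 2)) (a := 0) (b := π) (2 * π)
    simp only [Real.cos_two_pi_sub, sub_zero] at this
    rw [show 2 * π - π = π by ring] at this
    rw [← this]; ring
  rw [hfull]
  congr 1
  have hd := Real.Gamma_mul_Gamma_add_half (α / 2 + 1 / 2)
  unfold ProbabilityTheory.beta at hbeta
  unfold fracWeight
  rw [Real.Gamma_one_half_eq] at hbeta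
  have s1 : α / 2 + 1 / 2 + 1 / 2 = α / 2 + 1 := by ring
  have s2 : 2 * (α / 2 + 1 / 2) = α + 1 := by ring
  have s3 : 1 - (α + 1) = -α := by ring
  rw [s1] at hbeta hd
  rw [s2, s3] at hd
  have h4 : (4 : ℝ) ^ (-(α / 2)) = 2 ^ (-α) := by
    rw [show (4 : ℝ) = 2 ^ (2 : ℝ) by norm_num, ← Real.rpow_mul (by norm_num)]
    congr 1; ring
  rw [h4] at hbeta
  have g1 := Real.Gamma_pos_of_pos (show (0:ℝ) < α / 2 + 1 by linarith)
  have h2 : (0 : ℝ) < 2 ^ (-α) := by positivity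
  have hpi : √π * √π = π := Real.mul_self_sqrt Real.pi_pos.le
  simp only [zpow_zero, Int.cast_zero, sub_zero, add_zero, one_mul]
  rw [div_eq_iff g1.ne'] at hbeta
  generalize (∫ θ in (0 : ℝ)..π, (2 - 2 * Real.cos θ) ^ (α / 2)) = J at *
  rw [mul_assoc, mul_div_assoc', eq_comm, mul_div_assoc', div_eq_iff (by positivity)]
  apply mul_left_cancel₀ h2.ne'
  linear_combination (2 * Real.Gamma (α / 2 + 1)) * hbeta - (2 * √π) * hd
    - 2 * Real.Gamma (α + 1) * 2 ^ (-α) * hpi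

lemma symInt_eq (α : ℝ) (hα0 : 0 < α) (k : ℤ) :
    symInt α k = ((2 * π * fracWeight α k : ℝ) : ℂ) := by
  have hw : ∀ k : ℤ, ((k : ℂ) + 1 + (α / 2 : ℝ)) * ((2 * π * fracWeight α (k + 1) : ℝ) : ℂ)
      = (k - (α / 2 : ℝ)) * ((2 * π * fracWeight α k : ℝ) : ℂ) := by
    intro k
    have := congrArg (fun x : ℝ => (x : ℂ)) (fracWeight_rec α k)
    push_cast at this ⊢
    linear_combination (2 * π) * this
  induction k using Int.induction_on with
  | zero => exact symInt_zero α hα0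
  | succ n ih =>
    have h := symInt_rec α hα0 n
    rw [ih, ← hw] at h
    refine mul_left_cancel₀ ?_ h
    have : (0 : ℝ) < (n : ℝ) + 1 + α / 2 := by positivity
    have h2 := Complex.ofReal_ne_zero.2 this.ne'
    push_cast at h2 ⊢
    exact h2
  | pred n ih =>
    have h := symInt_rec α hα0 (-n - 1)
    have h' := hw (-n - 1)
    rw [sub_add_cancel] at h h'
    rw [ih, h'] at h
    refine (mul_left_cancel₀ ?_ h).symm
    have : -(n : ℝ) - 1 - α / 2 < 0 := by
      have : (0 : ℝ) ≤ n := by positivity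
      linarith
    have h2 := Complex.ofReal_ne_zero.2 this.ne
    push_cast at h2 ⊢
    exact h2

lemma symbol_hasSum (α : ℝ) (hα0 : 0 < α) (hα2 : α ≤ 2) (θ : ℝ) :
    HasSum (fun k : ℤ => (fracWeight α k : ℂ) * Complex.exp (Complex.I * k * θ))
      (((2 - 2 * Real.cos θ) ^ (α / 2) : ℝ) : ℂ) := by
  have : Fact (0 < 2 * π) := ⟨Real.two_pi_pos⟩
  have hper : Function.Periodic
      (fun θ : ℝ => (((2 - 2 * Real.cos θ) ^ (α / 2) : ℝ) : ℂ)) (2 * π) := by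
    intro x; simp only [Real.cos_add_two_pi]
  have hc : Continuous hper.lift := by
    refine continuous_coinduced_dom.2 ?_
    exact Complex.continuous_ofReal.comp (symbol_continuous α hα0)
  let f : C(AddCircle (2 * π), ℂ) := ⟨hper.lift, hc⟩
  have hcoef : ∀ k : ℤ, fourierCoeff f k = (fracWeight α k : ℂ) := by
    intro k
    rw [fourierCoeff_eq_intervalIntegral f k 0, zero_add]
    have : (∫ x in (0 : ℝ)..(2 * π), fourier (-k) (x : AddCircle (2 * π)) • f x) = symInt α k := by
      unfold symInt
      refine intervalIntegral.integral_congr fun x _ => ?_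
      simp only [fourier_coe_apply, smul_eq_mul]
      congr 2
      push_cast
      have := Real.pi_ne_zero
      field_simp
    rw [this, symInt_eq α hα0, Complex.real_smul]
    have := Complex.ofReal_ne_zero.2 Real.pi_ne_zero
    push_cast
    field_simp
  have hs : Summable (fourierCoeff f) := by
    rw [show fourierCoeff f = fun k : ℤ => (fracWeight α k : ℂ) from funext hcoef]
    exact Complex.ofRealCLM.summable (fracWeight_summable α hα0 hα2)
  have := has_pointwise_sum_fourier_series_of_summable hs (θ : AddCircle (2 * π))
  change HasSum _ (((2 - 2 * Real.cos θ) ^ (α / 2) : ℝ) : ℂ) at this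
  convert this using 1
  funext k
  rw [hcoef, fourier_coe_apply, smul_eq_mul]
  congr 2
  have := Complex.ofReal_ne_zero.2 Real.pi_ne_zero
  push_cast
  field_simp

/-- Let `α` be real with `0 < α ≤ 2`. Then for every real `θ`, the series
`Σ_{k ∈ ℤ} w_k^α e^{i k θ}` converges absolutely and equals
`(2 − 2 cos θ)^{α/2} = |2 sin(θ/2)|^α`. -/
theorem fracWeight_fourier_symbol (α : ℝ) (hα0 : 0 < α) (hα2 : α ≤ 2) (θ : ℝ) :
    Summable (fun k : ℤ => ‖(fracWeight α k : ℂ) * Complex.exp (Complex.I * k * θ)‖) ∧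
    (∑' k : ℤ, (fracWeight α k : ℂ) * Complex.exp (Complex.I * k * θ)) =
      (((2 - 2 * Real.cos θ) ^ (α / 2) : ℝ) : ℂ) ∧
    ((2 - 2 * Real.cos θ) ^ (α / 2) : ℝ) = |2 * Real.sin (θ / 2)| ^ α := by
  refine ⟨?_, (symbol_hasSum α hα0 hα2 θ).tsum_eq, symbol_eq α θ⟩
  exact (symbol_hasSum α hα0 hα2 θ).summable.norm
end
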